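/- arXiv:1211.6784 — 3 statements merged into one kernel-verified Lean document; each statement's English description precedes it below -/
import Mathlib

section
/- In the surface singular braid monoid SSB_m, for all indices i, k with |k − i| = 1 and every natural number s, one has a_i c̄_k b_i c_k Δ^{2s} = a_i c̄_k b_i c_k, where Δ = c_p c_{p+1} c_p with p = min(i, k) is the positive half-twist on the three strands involved. (Iterated form of relation A14.) -/
/-!
By A3 and the commutation of `a_i` with `c_i` (A2 with equal indices),
`a_i c̄_k b_i c_k = a_i c_i b_k c̄_i = c_i (a_i b_k) c̄_i`. Relation A12 says exactly that right
multiplication by the full twist `Δ²` fixes `a_i b_k`, and by the braid relation `Δ²` commutes with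
`c_i`, hence with `c̄_i`. So `Δ²`, and therefore each of its powers, passes through `c̄_i` and is
absorbed by `a_i b_k`.
-/

/-- The four generator families of the surface singular braid monoid:
`a`, `b` (singular), `c` (positive crossing), `cbar` (negative crossing). -/
inductive GenKind : Type
  | a | b | c | cbar
  deriving DecidableEq

/-- Valid strand indices `1 ≤ i ≤ m - 1` for the generators of `SSB m`. -/
abbrev Idx (m : ℕ) := {i : ℕ // 1 ≤ i ∧ i < m}

/-- Generators of the surface singular braid monoid `SSB m`:
a family together with an index. -/
abbrev Gen (m : ℕ) := GenKind × Idx m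

/-- The word consisting of a single generator, in the free monoid. -/
def fw {m : ℕ} (x : GenKind) (i : Idx m) : FreeMonoid (Gen m) := FreeMonoid.of (x, i)

/-- The defining relations A1)-A12) of the surface singular braid monoid. -/
inductive SSBRel (m : ℕ) : FreeMonoid (Gen m) → FreeMonoid (Gen m) → Prop
  | A1 (i : Idx m) : SSBRel m (fw .c i * fw .cbar i) 1
  | A1' (i : Idx m) : SSBRel m (fw .cbar i * fw .c i) 1
  | A2 (x y : GenKind) (i n : Idx m) (h : (i : ℕ) + 1 ≠ (n : ℕ) ∧ (n : ℕ) + 1 ≠ (i : ℕ)) :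
      SSBRel m (fw x i * fw y n) (fw y n * fw x i)
  | A3 (x : GenKind) (i k : Idx m) (h : (k : ℕ) = (i : ℕ) + 1 ∨ (i : ℕ) = (k : ℕ) + 1) :
      SSBRel m (fw .c i * fw x k * fw .cbar i) (fw .cbar k * fw x i * fw .c k)
  | A4 (x : GenKind) (i k : Idx m) (h : (k : ℕ) = (i : ℕ) + 1 ∨ (i : ℕ) = (k : ℕ) + 1) :
      SSBRel m (fw x i * fw .c k * fw .c i) (fw .c k * fw .c i * fw x k)
  | A5 (x : GenKind) (i k : Idx m) (h : (k : ℕ) = (i : ℕ) + 1 ∨ (i : ℕ) = (k : ℕ) + 1) :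
      SSBRel m (fw x i * fw .cbar k * fw .cbar i) (fw .cbar k * fw .cbar i * fw x k)
  | A6 (i k : Idx m) (h : (k : ℕ) = (i : ℕ) + 1 ∨ (i : ℕ) = (k : ℕ) + 1) :
      SSBRel m (fw .a i * fw .b k) (fw .b k * fw .a i)
  | A7 (i j k : Idx m) (hi : 2 < (i : ℕ)) (hj : (j : ℕ) + 1 = (i : ℕ))
      (hk : (k : ℕ) + 2 = (i : ℕ)) :
      SSBRel m (fw .a i * fw .b k * (fw .c j * fw .c k * fw .c i * fw .c j) ^ 2)
        (fw .a i * fw .b k)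
  | A8 (i j k : Idx m) (hi : 2 < (i : ℕ)) (hj : (j : ℕ) + 1 = (i : ℕ))
      (hk : (k : ℕ) + 2 = (i : ℕ)) :
      SSBRel m (fw .b i * fw .a k * (fw .c j * fw .c k * fw .c i * fw .c j) ^ 2)
        (fw .b i * fw .a k)
  | A9 (i : Idx m) : SSBRel m (fw .a i * fw .a i) (fw .a i)
  | A10 (i : Idx m) : SSBRel m (fw .b i * fw .b i) (fw .b i)
  | A11 (i : Idx m) : SSBRel m (fw .a i * fw .b i * (fw .c i) ^ 2) (fw .a i * fw .b i)
  | A12 (i k p q : Idx m) (h : (k : ℕ) = (i : ℕ) + 1 ∨ (i : ℕ) = (k : ℕ) + 1)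
      (hp : (p : ℕ) = min (i : ℕ) (k : ℕ)) (hq : (q : ℕ) = (p : ℕ) + 1) :
      SSBRel m (fw .a i * fw .b k * (fw .c p * fw .c q * fw .c p))
        (fw .a i * fw .b k * (fw .cbar p * fw .cbar q * fw .cbar p))

/-- The surface singular braid monoid on `m` strands. -/
abbrev SSB (m : ℕ) := PresentedMonoid (SSBRel m)

/-- The generator `x_j` of `SSB m` (`x ∈ {a, b, c, cbar}`, `1 ≤ j ≤ m - 1`);
defined as `1` for out-of-range indices. -/
def G (m : ℕ) (x : GenKind) (j : ℕ) : SSB m :=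
  if h : 1 ≤ j ∧ j < m then PresentedMonoid.of (SSBRel m) (x, ⟨j, h⟩) else 1

/-- The descending chain `c_j c_{j-1} ⋯ c_1` in `SSB m`. -/
def chain (m : ℕ) : ℕ → SSB m
  | 0 => 1
  | j + 1 => G m .c (j + 1) * chain m j

/-- The positive half-twist `Δ_n = (c_1)(c_2 c_1)⋯(c_{n-1} c_{n-2} ⋯ c_1)` on the
first `n` strands of `SSB m`. -/
def delta (m : ℕ) : ℕ → SSB m
  | 0 => 1
  | n + 1 => delta m n * chain m n

/-- The full twist `(xyx)²` commutes with `x`, because `xyx` exchanges `x` and `y`. -/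
lemma commute_full_twist {M : Type*} [Monoid M] {x y : M} (h : x * y * x = y * x * y) :
    Commute ((x * y * x) ^ 2) x := by
  have h₁ : SemiconjBy (x * y * x) y x := by
    change x * y * x * y = x * (x * y * x)
    calc x * y * x * y = x * (y * x * y) := by simp only [mul_assoc]
      _ = x * (x * y * x) := by rw [h]
  have h₂ : SemiconjBy (x * y * x) x y := by
    change x * y * x * x = y * (x * y * x)
    calc x * y * x * x = y * x * y * x := by rw [h]
      _ = y * (x * y * x) := by simp only [mul_assoc]
  rw [pow_two]
  exact h₁.mul_left h₂

/-- The monoid-theoretic core, with `x = c_i`, `y = c_k`, primes marking their inverses,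
`a = a_i` and `b = b_k`. -/
lemma conj_mul_twist_pow {M : Type*} [Monoid M] {a b x x' y y' : M}
    (hx : x * x' = 1) (hx' : x' * x = 1) (hy' : y' * y = 1)
    (hbraid : x * y * x = y * x * y)
    (hab : a * b * (x * y * x) = a * b * (x' * y' * x')) (s : ℕ) :
    x * (a * b) * x' * (x * y * x) ^ (2 * s) = x * (a * b) * x' := by
  have hinv : x' * y' * x' * (x * y * x) = 1 := by
    calc x' * y' * x' * (x * y * x) = x' * (y' * (x' * x) * y) * x := by simp only [mul_assoc]
      _ = 1 := by rw [hx', mul_one, hy', mul_one, hx']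
  have hfix : a * b * (x * y * x) ^ 2 = a * b := by
    rw [pow_two, ← mul_assoc, hab, mul_assoc (a * b), hinv, mul_one]
  have hcomm : x' * (x * y * x) ^ 2 = (x * y * x) ^ 2 * x' := by
    let u : Mˣ := ⟨x, x', hx, hx'⟩
    have hu : Commute ((x * y * x) ^ 2) (u : M) := commute_full_twist hbraid
    exact hu.units_inv_right.eq.symm
  induction s with
  | zero => simp
  | succ n ih =>
    calc x * (a * b) * x' * (x * y * x) ^ (2 * (n + 1))
        = x * (a * b) * x' * (x * y * x) ^ (2 * n) * (x * y * x) ^ 2 := by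
          rw [mul_add, mul_one, pow_add, mul_assoc _ (_ ^ (2 * n))]
      _ = x * (a * b * (x * y * x) ^ 2) * x' := by
          rw [ih, mul_assoc _ x', hcomm]; simp only [mul_assoc]
      _ = x * (a * b) * x' := by rw [hfix]

/-- A defining relation holds between the corresponding classes in `SSB m`. -/
lemma SSBRel.mk_eq {m : ℕ} {u v : FreeMonoid (Gen m)} (h : SSBRel m u v) :
    PresentedMonoid.mk (SSBRel m) u = PresentedMonoid.mk (SSBRel m) v :=
  PresentedMonoid.mk_eq_mk_of_rel h

lemma G_eq_mk {m j : ℕ} (x : GenKind) (h : 1 ≤ j ∧ j < m) :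
    G m x j = PresentedMonoid.mk (SSBRel m) (fw x ⟨j, h⟩) := dif_pos h

lemma G_braid {m i k : ℕ} (hi : 1 ≤ i ∧ i < m) (hk : 1 ≤ k ∧ k < m)
    (hik : k = i + 1 ∨ i = k + 1) :
    G m .c i * G m .c k * G m .c i = G m .c k * G m .c i * G m .c k := by
  simpa only [G_eq_mk _ hi, G_eq_mk _ hk, map_mul] using
    (SSBRel.A4 .c ⟨i, hi⟩ ⟨k, hk⟩ hik).mk_eq

lemma G_c_mul_cbar {m i : ℕ} (hi : 1 ≤ i ∧ i < m) : G m .c i * G m .cbar i = 1 := by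
  simpa only [G_eq_mk _ hi, map_mul, map_one] using (SSBRel.A1 ⟨i, hi⟩).mk_eq

lemma G_cbar_mul_c {m i : ℕ} (hi : 1 ≤ i ∧ i < m) : G m .cbar i * G m .c i = 1 := by
  simpa only [G_eq_mk _ hi, map_mul, map_one] using (SSBRel.A1' ⟨i, hi⟩).mk_eq

/-- The braid relation for the negative crossings. -/
lemma G_braid_bar {m i k : ℕ} (hi : 1 ≤ i ∧ i < m) (hk : 1 ≤ k ∧ k < m)
    (hik : k = i + 1 ∨ i = k + 1) :
    G m .cbar i * G m .cbar k * G m .cbar i = G m .cbar k * G m .cbar i * G m .cbar k := by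
  simpa only [G_eq_mk _ hi, G_eq_mk _ hk, map_mul] using
    (SSBRel.A5 .cbar ⟨i, hi⟩ ⟨k, hk⟩ hik).mk_eq

/-- The word for the half-twist may start with either of the two indices. -/
lemma G_half_twist {m i k : ℕ} (hi : 1 ≤ i ∧ i < m) (hk : 1 ≤ k ∧ k < m)
    (hik : k = i + 1 ∨ i = k + 1) :
    G m .c (min i k) * G m .c (min i k + 1) * G m .c (min i k) =
      G m .c i * G m .c k * G m .c i := by
  obtain rfl | rfl := hik
  · rw [min_eq_left (Nat.le_succ i)]
  · rw [min_eq_right (Nat.le_succ k), G_braid hi hk (Or.inr rfl)]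

/-- Relation A12, with the half-twists written so as to start with the index `i`. -/
lemma G_a_mul_b_mul_half_twist {m i k : ℕ} (hi : 1 ≤ i ∧ i < m) (hk : 1 ≤ k ∧ k < m)
    (hik : k = i + 1 ∨ i = k + 1) :
    G m .a i * G m .b k * (G m .c i * G m .c k * G m .c i) =
      G m .a i * G m .b k * (G m .cbar i * G m .cbar k * G m .cbar i) := by
  obtain rfl | rfl := hik
  · simpa only [G_eq_mk _ hi, G_eq_mk _ hk, map_mul] using
      (SSBRel.A12 ⟨i, hi⟩ ⟨i + 1, hk⟩ ⟨i, hi⟩ ⟨i + 1, hk⟩ (Or.inl rfl) (by simp) rfl).mk_eq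
  · rw [G_braid hi hk (Or.inr rfl), G_braid_bar hi hk (Or.inr rfl)]
    simpa only [G_eq_mk _ hi, G_eq_mk _ hk, map_mul] using
      (SSBRel.A12 ⟨k + 1, hi⟩ ⟨k, hk⟩ ⟨k, hk⟩ ⟨k + 1, hi⟩ (Or.inr rfl) (by simp) rfl).mk_eq

lemma G_a_mul_c {m i : ℕ} (hi : 1 ≤ i ∧ i < m) :
    G m .a i * G m .c i = G m .c i * G m .a i := by
  simpa only [G_eq_mk _ hi, map_mul] using
    (SSBRel.A2 .a .c ⟨i, hi⟩ ⟨i, hi⟩ (by simp)).mk_eq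

lemma G_c_mul_b_mul_cbar {m i k : ℕ} (hi : 1 ≤ i ∧ i < m) (hk : 1 ≤ k ∧ k < m)
    (hik : k = i + 1 ∨ i = k + 1) :
    G m .c i * G m .b k * G m .cbar i = G m .cbar k * G m .b i * G m .c k := by
  simpa only [G_eq_mk _ hi, G_eq_mk _ hk, map_mul] using
    (SSBRel.A3 .b ⟨i, hi⟩ ⟨k, hk⟩ hik).mk_eq

/-- Iterated relation A14: `a_i c̄_k b_i c_k Δ^(2s) = a_i c̄_k b_i c_k`, where
`Δ = c_p c_{p+1} c_p` with `p = min i k`, for `|k - i| = 1` and every `s : ℕ`. -/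
theorem relation_A14_iterated (m i k : ℕ) (hi : 1 ≤ i ∧ i < m) (hk : 1 ≤ k ∧ k < m)
    (hik : k = i + 1 ∨ i = k + 1) (s : ℕ) :
    G m .a i * G m .cbar k * G m .b i * G m .c k *
        (G m .c (min i k) * G m .c (min i k + 1) * G m .c (min i k)) ^ (2 * s) =
      G m .a i * G m .cbar k * G m .b i * G m .c k := by
  have hconj : G m .a i * G m .cbar k * G m .b i * G m .c k =
      G m .c i * (G m .a i * G m .b k) * G m .cbar i := by
    calc G m .a i * G m .cbar k * G m .b i * G m .c k
        = G m .a i * (G m .cbar k * G m .b i * G m .c k) := by simp only [mul_assoc]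
      _ = G m .a i * G m .c i * G m .b k * G m .cbar i := by
          rw [← G_c_mul_b_mul_cbar hi hk hik]; simp only [mul_assoc]
      _ = G m .c i * (G m .a i * G m .b k) * G m .cbar i := by
          rw [G_a_mul_c hi]; simp only [mul_assoc]
  rw [G_half_twist hi hk hik, hconj]
  exact conj_mul_twist_pow (G_c_mul_cbar hi) (G_cbar_mul_c hi) (G_cbar_mul_c hk)
    (G_braid hi hk hik) (G_a_mul_b_mul_half_twist hi hk hik) s
end

section
/- Word form of relation A13: In the surface singular braid monoid SSB_m, fix n with 2 ≤ n ≤ m. For every word w = x^{(1)}_{i_1} x^{(2)}_{i_2} ⋯ x^{(r)}_{i_r} in the generators with all indices i_j < n (each x^{(j)} ∈ {a, b, c, c̄}), one has w · Δ_n = Δ_n · w', where w' = x^{(1)}_{n−i_1} x^{(2)}_{n−i_2} ⋯ x^{(r)}_{n−i_r} is obtained from w by replacing every generator index i by n − i. -/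
/-- Relation A2 for the letters `G m x i`. No range hypotheses are needed, since out-of-range
letters are `1`. -/
theorem G_comm (m : ℕ) (x y : GenKind) (i n : ℕ) (h : i + 1 ≠ n ∧ n + 1 ≠ i) :
    G m x i * G m y n = G m y n * G m x i := by
  unfold G
  split_ifs with hi hk
  · exact PresentedMonoid.mk_eq_mk_of_rel (SSBRel.A2 x y ⟨i, hi⟩ ⟨n, hk⟩ h)
  all_goals simp

/-- Relation A4 for the letters `G m x i`. -/
theorem G_A4 (m : ℕ) (x : GenKind) (i k : ℕ) (hi : 1 ≤ i ∧ i < m) (hk : 1 ≤ k ∧ k < m)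
    (h : k = i + 1 ∨ i = k + 1) :
    G m x i * G m .c k * G m .c i = G m .c k * G m .c i * G m x k := by
  unfold G
  simp only [hi, hk, and_self, dif_pos]
  exact PresentedMonoid.mk_eq_mk_of_rel (SSBRel.A4 x ⟨i, hi⟩ ⟨k, hk⟩ h)

theorem G_comm_chain (m : ℕ) (x : GenKind) (i j : ℕ) (h : j + 1 < i) :
    Commute (G m x i) (chain m j) := by
  induction j with
  | zero => exact Commute.one_right _
  | succ j ih =>
    have h₁ : Commute (G m x i) (G m .c (j + 1)) := G_comm m x .c i (j + 1) (by omega)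
    exact h₁.mul_right (ih (by omega))

theorem G_comm_delta (m : ℕ) (x : GenKind) (i n : ℕ) (h : n < i) :
    Commute (G m x i) (delta m n) := by
  induction n with
  | zero => exact Commute.one_right _
  | succ n ih => exact (ih (by omega)).mul_right (G_comm_chain m x i n h)

/-- Passing through `c_n ⋯ c_1` from left to right raises the index of a letter by one. -/
theorem G_mul_chain (m : ℕ) (x : GenKind) (j n : ℕ) (hj : 1 ≤ j) (hjn : j < n) (hn : n < m) :
    G m x j * chain m n = chain m n * G m x (j + 1) := by
  induction n with
  | zero => omega
  | succ n ih =>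
    by_cases h : j = n
    · subst h
      obtain ⟨k, rfl⟩ : ∃ k, j = k + 1 := ⟨j - 1, by omega⟩
      simp only [chain]
      have h₁ := G_A4 m x (k + 1) (k + 1 + 1) (by omega) (by omega) (by omega)
      have h₂ := (G_comm_chain m x (k + 1 + 1) k (by omega)).eq
      rw [← mul_assoc, ← mul_assoc, h₁, mul_assoc, h₂]
      simp only [mul_assoc]
    · have h₁ := G_comm m x .c j (n + 1) (by omega)
      simp only [chain]
      rw [← mul_assoc, h₁, mul_assoc, ih (by omega) (by omega), mul_assoc]

/-- Passing through two consecutive chains turns the top letter `x_{k+1}` into `x_1`. -/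
theorem G_mul_chain_mul_chain (m : ℕ) (x : GenKind) (k : ℕ) (hk : k + 1 < m) :
    G m x (k + 1) * (chain m k * chain m (k + 1)) =
      chain m k * chain m (k + 1) * G m x 1 := by
  induction k with
  | zero =>
    simp only [chain, one_mul, mul_one]
    exact G_comm m x .c _ _ (by omega)
  | succ k ih =>
    -- Since `c_{k+2}` commutes with `chain k`, it can be moved next to `c_{k+1}`.
    have h₂ := (G_comm_chain m .c (k + 1 + 1) k (by omega)).eq
    have h₁ : chain m (k + 1) * chain m (k + 1 + 1) =
        G m .c (k + 1) * G m .c (k + 1 + 1) * (chain m k * chain m (k + 1)) := by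
      rw [show chain m (k + 1 + 1) = G m .c (k + 1 + 1) * chain m (k + 1) from rfl]
      nth_rw 1 [show chain m (k + 1) = G m .c (k + 1) * chain m k from rfl]
      rw [mul_assoc, ← mul_assoc (chain m k), ← h₂]
      simp only [mul_assoc]
    have h₃ := G_A4 m x (k + 1 + 1) (k + 1) (by omega) (by omega) (by omega)
    rw [h₁, ← mul_assoc, ← mul_assoc (G m x _), h₃, mul_assoc, ih (by omega)]
    simp only [mul_assoc]

/-- The one-letter case: `x_i Δ_n = Δ_n x_{n-i}`. -/
theorem G_mul_delta (m n : ℕ) (hnm : n ≤ m) (x : GenKind) (i : ℕ) (hi : 1 ≤ i) (hin : i < n) :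
    G m x i * delta m n = delta m n * G m x (n - i) := by
  induction n with
  | zero => omega
  | succ n ih =>
    by_cases h : i = n
    · subst h
      obtain ⟨k, rfl⟩ : ∃ k, i = k + 1 := ⟨i - 1, by omega⟩
      rw [show k + 1 + 1 - (k + 1) = 1 by omega]
      have h₁ := (G_comm_delta m x (k + 1) k (by omega)).eq
      have h₂ := G_mul_chain_mul_chain m x k (by omega)
      simp only [delta, mul_assoc] at h₁ h₂ ⊢
      rw [← mul_assoc, h₁, mul_assoc, h₂]
    · simp only [delta]
      rw [← mul_assoc, ih (by omega) (by omega), mul_assoc,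
        G_mul_chain m x (n - i) n (by omega) (by omega) (by omega), mul_assoc,
        show n - i + 1 = n + 1 - i by omega]

/-- Word form of relation A13: for any word `w` in the generators with all indices `< n`
(and `2 ≤ n ≤ m`), one has `w Δ_n = Δ_n w'`, where `w'` is obtained from `w` by replacing
every index `i` by `n - i`. -/
theorem relation_A13_word (m n : ℕ) (hn : 2 ≤ n) (hnm : n ≤ m)
    (L : List (GenKind × ℕ)) (hL : ∀ p ∈ L, 1 ≤ p.2 ∧ p.2 < n) :
    (L.map fun p => G m p.1 p.2).prod * delta m n =
      delta m n * (L.map fun p => G m p.1 (n - p.2)).prod := by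
  induction L with
  | nil => simp
  | cons p L ih =>
    obtain ⟨h₁, h₂⟩ := hL p (by simp)
    have h₃ := ih fun q hq => hL q (by simp [hq])
    simp only [List.map_cons, List.prod_cons]
    rw [mul_assoc, h₃, ← mul_assoc, G_mul_delta m n hnm p.1 p.2 h₁ h₂, mul_assoc]
end

section
/- Normal form in SSB_2 (the algebraic content of the paper's classification of surfaces of singular braid index two): every element of the surface singular braid monoid SSB_2 is equal to a_1^α b_1^β w, where α, β ∈ {0, 1} and w is either c_1^n or c̄_1^n for some natural number n; moreover, every element in which both a_1 and b_1 occur is equal to a_1 b_1 or to a_1 b_1 c_1. -/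
/-- The only strand index of `SSB 2`. -/
def idxOne : Idx 2 := ⟨1, le_rfl, one_lt_two⟩

theorem eq_idxOne (i : Idx 2) : i = idxOne := by
  obtain ⟨i, h⟩ := i
  exact Subtype.ext (show i = 1 by omega)

theorem mk_fw_two (x : GenKind) (i : Idx 2) :
    PresentedMonoid.mk (SSBRel 2) (fw x i) = G 2 x 1 := by
  rw [eq_idxOne i]
  rfl

theorem G_two_mul_comm (x y : GenKind) : G 2 x 1 * G 2 y 1 = G 2 y 1 * G 2 x 1 := by
  simpa [mk_fw_two] using
    PresentedMonoid.mk_eq_mk_of_rel (SSBRel.A2 x y idxOne idxOne (by simp))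

/-- `SSB 2` is generated by the elements `G 2 x 1`; induction by left multiplication by them. -/
theorem SSB_two_induction {P : SSB 2 → Prop} (one : P 1)
    (mul : ∀ (x : GenKind) (y : SSB 2), P y → P (G 2 x 1 * y)) (y : SSB 2) : P y := by
  obtain ⟨w, rfl⟩ := PresentedMonoid.surjective_mk y
  induction w using FreeMonoid.inductionOn' with
  | one => simpa using one
  | of_mul g w ih =>
    rw [map_mul]
    have h := mul g.1 _ ih
    rwa [← mk_fw_two g.1 g.2] at h

theorem SSB_two_mul_comm (x y : SSB 2) : x * y = y * x := by
  have gen (k : GenKind) (y : SSB 2) : Commute (G 2 k 1) y := by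
    induction y using SSB_two_induction with
    | one => exact Commute.one_right _
    | mul l y ih => exact Commute.mul_right (G_two_mul_comm k l) ih
  induction x using SSB_two_induction with
  | one => simp
  | mul k x ih => exact Commute.mul_left (gen k y) ih

instance instCommMonoidSSBTwo : CommMonoid (SSB 2) :=
  { (inferInstance : Monoid (SSB 2)) with mul_comm := SSB_two_mul_comm }

/-- The generator `c₁` of `SSB 2` as a unit, with inverse `c̄₁`. -/
def cUnit : (SSB 2)ˣ where
  val := G 2 .c 1
  inv := G 2 .cbar 1
  val_inv := by
    simpa [mk_fw_two] using PresentedMonoid.mk_eq_mk_of_rel (SSBRel.A1 (m := 2) idxOne)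
  inv_val := by
    simpa [mk_fw_two] using PresentedMonoid.mk_eq_mk_of_rel (SSBRel.A1' (m := 2) idxOne)

theorem val_cUnit : (cUnit : SSB 2) = G 2 .c 1 := rfl

theorem val_inv_cUnit : ((cUnit⁻¹ : (SSB 2)ˣ) : SSB 2) = G 2 .cbar 1 := rfl

theorem isIdempotentElem_a : IsIdempotentElem (G 2 .a 1) := by
  simpa [IsIdempotentElem, mk_fw_two] using
    PresentedMonoid.mk_eq_mk_of_rel (SSBRel.A9 (m := 2) idxOne)

theorem isIdempotentElem_b : IsIdempotentElem (G 2 .b 1) := by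
  simpa [IsIdempotentElem, mk_fw_two] using
    PresentedMonoid.mk_eq_mk_of_rel (SSBRel.A10 (m := 2) idxOne)

theorem ab_mul_c_sq : G 2 .a 1 * G 2 .b 1 * G 2 .c 1 ^ 2 = G 2 .a 1 * G 2 .b 1 := by
  simpa [mk_fw_two] using PresentedMonoid.mk_eq_mk_of_rel (SSBRel.A11 (m := 2) idxOne)

/-- An element fixed by multiplication by a unit is fixed by all integer powers of the unit. -/
theorem mul_zpow_of_mul_eq {M : Type*} [Monoid M] {x : M} {v : Mˣ} (h : x * v = x) (k : ℤ) :
    x * ((v ^ k : Mˣ) : M) = x := by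
  have h_inv : x * ((v⁻¹ : Mˣ) : M) = x := by
    rw [Units.mul_inv_eq_iff_eq_mul, h]
  induction k with
  | zero => simp
  | succ n ih => rw [zpow_add_one, Units.val_mul, ← mul_assoc, ih, h]
  | pred n ih => rw [zpow_sub_one, Units.val_mul, ← mul_assoc, ih, h_inv]

theorem exists_zpow_normal_form (x : SSB 2) : ∃ (α β : ℕ) (z : ℤ), α ≤ 1 ∧ β ≤ 1 ∧
    x = G 2 .a 1 ^ α * G 2 .b 1 ^ β * ((cUnit ^ z : (SSB 2)ˣ) : SSB 2) := by
  induction x using SSB_two_induction with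
  | one => exact ⟨0, 0, 0, by simp⟩
  | mul k y ih =>
    obtain ⟨α, β, z, hα, hβ, rfl⟩ := ih
    cases k with
    | a =>
      refine ⟨1, β, z, le_rfl, hβ, ?_⟩
      rw [← mul_assoc, ← mul_assoc, ← pow_succ', isIdempotentElem_a.pow_succ_eq, pow_one]
    | b =>
      refine ⟨α, 1, z, hα, le_rfl, ?_⟩
      rw [← mul_assoc, mul_left_comm, ← pow_succ', isIdempotentElem_b.pow_succ_eq, pow_one]
    | c =>
      refine ⟨α, β, z + 1, hα, hβ, ?_⟩
      rw [zpow_add_one, Units.val_mul, val_cUnit, mul_comm, mul_assoc]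
    | cbar =>
      refine ⟨α, β, z - 1, hα, hβ, ?_⟩
      rw [zpow_sub_one, Units.val_mul, val_inv_cUnit, mul_comm, mul_assoc]

theorem ab_mul_zpow (z : ℤ) :
    G 2 .a 1 * G 2 .b 1 * ((cUnit ^ z : (SSB 2)ˣ) : SSB 2) = G 2 .a 1 * G 2 .b 1 ∨
    G 2 .a 1 * G 2 .b 1 * ((cUnit ^ z : (SSB 2)ˣ) : SSB 2) =
      G 2 .a 1 * G 2 .b 1 * G 2 .c 1 := by
  have h : G 2 .a 1 * G 2 .b 1 * ((cUnit ^ 2 : (SSB 2)ˣ) : SSB 2) = G 2 .a 1 * G 2 .b 1 := by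
    rw [Units.val_pow_eq_pow_val, val_cUnit, ab_mul_c_sq]
  have even (k : ℤ) : G 2 .a 1 * G 2 .b 1 * ((cUnit ^ (2 * k) : (SSB 2)ˣ) : SSB 2) =
      G 2 .a 1 * G 2 .b 1 := by
    have hk := mul_zpow_of_mul_eq h k
    rwa [← zpow_natCast, ← zpow_mul] at hk
  obtain ⟨k, rfl | rfl⟩ := Int.even_or_odd' z
  · exact Or.inl (even k)
  · right
    rw [zpow_add_one, Units.val_mul, ← mul_assoc, even, val_cUnit]

/-- Normal form in `SSB 2`: every element equals `a₁^α b₁^β w` with `α, β ∈ {0, 1}` and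
`w = c₁^n` or `w = c̄₁^n`; moreover every element containing both `a₁` and `b₁`
(i.e. every `a₁^p b₁^q c₁^r c̄₁^s` with `p, q ≥ 1`) equals `a₁ b₁` or `a₁ b₁ c₁`. -/
theorem SSB_two_normal_form :
    (∀ x : SSB 2, ∃ α β n : ℕ, α ≤ 1 ∧ β ≤ 1 ∧
      (x = (G 2 .a 1) ^ α * (G 2 .b 1) ^ β * (G 2 .c 1) ^ n ∨
        x = (G 2 .a 1) ^ α * (G 2 .b 1) ^ β * (G 2 .cbar 1) ^ n)) ∧
    (∀ p q r s : ℕ, 1 ≤ p → 1 ≤ q →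
      (G 2 .a 1) ^ p * (G 2 .b 1) ^ q * (G 2 .c 1) ^ r * (G 2 .cbar 1) ^ s =
          G 2 .a 1 * G 2 .b 1 ∨
        (G 2 .a 1) ^ p * (G 2 .b 1) ^ q * (G 2 .c 1) ^ r * (G 2 .cbar 1) ^ s =
          G 2 .a 1 * G 2 .b 1 * G 2 .c 1) := by
  constructor
  · intro x
    obtain ⟨α, β, z, hα, hβ, rfl⟩ := exists_zpow_normal_form x
    obtain ⟨n, rfl | rfl⟩ := z.eq_nat_or_neg
    · refine ⟨α, β, n, hα, hβ, Or.inl ?_⟩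
      rw [zpow_natCast, Units.val_pow_eq_pow_val, val_cUnit]
    · refine ⟨α, β, n, hα, hβ, Or.inr ?_⟩
      rw [zpow_neg, zpow_natCast, ← inv_pow, Units.val_pow_eq_pow_val, val_inv_cUnit]
  · intro p q r s hp hq
    obtain ⟨p, rfl⟩ := Nat.exists_eq_add_of_le' hp
    obtain ⟨q, rfl⟩ := Nat.exists_eq_add_of_le' hq
    have h : G 2 .c 1 ^ r * G 2 .cbar 1 ^ s =
        ((cUnit ^ ((r : ℤ) - s) : (SSB 2)ˣ) : SSB 2) := by
      rw [zpow_sub, zpow_natCast, zpow_natCast, ← inv_pow, Units.val_mul,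
        Units.val_pow_eq_pow_val, Units.val_pow_eq_pow_val, val_cUnit, val_inv_cUnit]
    rw [isIdempotentElem_a.pow_succ_eq, isIdempotentElem_b.pow_succ_eq, mul_assoc _ (_ ^ r), h]
    exact ab_mul_zpow _
end
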